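/- (Lemma 2.1, escape estimate.) Let K ⊆ U be compact, T₀ ∈ ℝ, and let (r(t),θ(t),ρ(t),ω(t)) : (−∞,T₀] → (1,∞)×K×ℝ×ℝ^{n-1} be a solution of the Hamiltonian system with energy p₀ > 0 such that r(t) → ∞ as t → −∞. Then there exists C > 0 such that r(t) > C^{-1}|t| − C for all t < −C. -/

import Mathlib

open Real Set Filter Topology

namespace Scattering

/-- The Euclidean norm of a vector in `Fin m → ℝ`. -/
noncomputable def eNorm {m : ℕ} (v : Fin m → ℝ) : ℝ := Real.sqrt (∑ j, v j ^ 2)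

/-- Partial derivative in the radial variable of a function of `(r, θ)`. -/
noncomputable def pderivR {m : ℕ} (f : ℝ → (Fin m → ℝ) → ℝ) : ℝ → (Fin m → ℝ) → ℝ :=
  fun r θ => deriv (fun s => f s θ) r

/-- Partial derivative in the `j`-th angular variable of a function of `(r, θ)`. -/
noncomputable def pderivTheta {m : ℕ} (j : Fin m) (f : ℝ → (Fin m → ℝ) → ℝ) :
    ℝ → (Fin m → ℝ) → ℝ :=
  fun r θ => fderiv ℝ (f r) θ (Pi.single j 1)

/-- Iterated angular derivatives `∂_θ^α` for a multi-index `α` (a list of directions). -/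
noncomputable def thetaDerivs {m : ℕ} (α : List (Fin m)) (f : ℝ → (Fin m → ℝ) → ℝ) :
    ℝ → (Fin m → ℝ) → ℝ :=
  α.foldr pderivTheta f

/-- `DecayOn f ν S K` : for all `k, α` there is `C > 0` with
`|∂_r^k ∂_θ^α f(r,θ)| ≤ C r^{-ν-k}` for `r ∈ (S,∞)`, `θ ∈ K`. -/
def DecayOn {m : ℕ} (f : ℝ → (Fin m → ℝ) → ℝ) (ν S : ℝ) (K : Set (Fin m → ℝ)) : Prop :=
  ∀ (k : ℕ) (α : List (Fin m)), ∃ C > 0, ∀ r ∈ Ioi S, ∀ θ ∈ K,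
    |(pderivR (m := m))^[k] (thetaDerivs α f) r θ| ≤ C * r ^ (-ν - (k : ℝ))

/-- The classical kinetic energy function
`p(r,θ,ρ,ω) = ρ² + r⁻²Σ h^{jk} ω_j ω_k + a₀ ρ² + r⁻¹ Σ a₁^j ρ ω_j + r⁻² Σ a₂^{jk} ω_j ω_k`. -/
noncomputable def energy {m : ℕ} (hM : (Fin m → ℝ) → Matrix (Fin m) (Fin m) ℝ)
    (a0 : ℝ → (Fin m → ℝ) → ℝ) (a1 : ℝ → (Fin m → ℝ) → Fin m → ℝ)
    (a2 : ℝ → (Fin m → ℝ) → Matrix (Fin m) (Fin m) ℝ) :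
    ℝ → (Fin m → ℝ) → ℝ → (Fin m → ℝ) → ℝ :=
  fun r θ ρ ω =>
    ρ ^ 2 + (∑ j, ∑ k, hM θ j k * ω j * ω k) / r ^ 2 + a0 r θ * ρ ^ 2
      + (∑ j, a1 r θ j * ρ * ω j) / r + (∑ j, ∑ k, a2 r θ j k * ω j * ω k) / r ^ 2

section PhaseDerivs

variable {m : ℕ} (p : ℝ → (Fin m → ℝ) → ℝ → (Fin m → ℝ) → ℝ)

/-- `∂p/∂r`. -/
noncomputable def pdR (r : ℝ) (θ : Fin m → ℝ) (ρ : ℝ) (ω : Fin m → ℝ) : ℝ :=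
  deriv (fun s => p s θ ρ ω) r

/-- `∂p/∂θ_j`. -/
noncomputable def pdTheta (j : Fin m) (r : ℝ) (θ : Fin m → ℝ) (ρ : ℝ) (ω : Fin m → ℝ) : ℝ :=
  fderiv ℝ (fun θ' => p r θ' ρ ω) θ (Pi.single j 1)

/-- `∂p/∂ρ`. -/
noncomputable def pdRho (r : ℝ) (θ : Fin m → ℝ) (ρ : ℝ) (ω : Fin m → ℝ) : ℝ :=
  deriv (fun s => p r θ s ω) ρ

/-- `∂p/∂ω_j`. -/
noncomputable def pdOmega (j : Fin m) (r : ℝ) (θ : Fin m → ℝ) (ρ : ℝ) (ω : Fin m → ℝ) : ℝ :=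
  fderiv ℝ (fun ω' => p r θ ρ ω') ω (Pi.single j 1)

/-- `(r,θ,ρ,ω)` solves the Hamiltonian system
`ṙ = ∂p/∂ρ, θ̇ = ∂p/∂ω, ρ̇ = -∂p/∂r, ω̇ = -∂p/∂θ` on the set `I` of times. -/
def IsHamSolOn (r : ℝ → ℝ) (θ : ℝ → Fin m → ℝ) (ρ : ℝ → ℝ) (ω : ℝ → Fin m → ℝ)
    (I : Set ℝ) : Prop :=
  ∀ t ∈ I,
    HasDerivAt r (pdRho p (r t) (θ t) (ρ t) (ω t)) t ∧
    (∀ j, HasDerivAt (fun s => θ s j) (pdOmega p j (r t) (θ t) (ρ t) (ω t)) t) ∧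
    HasDerivAt ρ (-pdR p (r t) (θ t) (ρ t) (ω t)) t ∧
    (∀ j, HasDerivAt (fun s => ω s j) (-pdTheta p j (r t) (θ t) (ρ t) (ω t)) t)

/-- The interaction-picture (time-dependent) Hamiltonian `K(t,R,θ,ρ,ω) = ρ² - p(R+2tρ,θ,ρ,ω)`. -/
noncomputable def Kint (t R : ℝ) (θ : Fin m → ℝ) (ρ : ℝ) (ω : Fin m → ℝ) : ℝ :=
  ρ ^ 2 - p (R + 2 * t * ρ) θ ρ ω

/-- `∂K/∂R`. -/
noncomputable def KdR (t R : ℝ) (θ : Fin m → ℝ) (ρ : ℝ) (ω : Fin m → ℝ) : ℝ :=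
  deriv (fun x => Kint p t x θ ρ ω) R

/-- `∂K/∂θ_j`. -/
noncomputable def KdTheta (j : Fin m) (t R : ℝ) (θ : Fin m → ℝ) (ρ : ℝ) (ω : Fin m → ℝ) : ℝ :=
  fderiv ℝ (fun θ' => Kint p t R θ' ρ ω) θ (Pi.single j 1)

/-- `∂K/∂ρ`. -/
noncomputable def KdRho (t R : ℝ) (θ : Fin m → ℝ) (ρ : ℝ) (ω : Fin m → ℝ) : ℝ :=
  deriv (fun x => Kint p t R θ x ω) ρ

/-- `∂K/∂ω_j`. -/
noncomputable def KdOmega (j : Fin m) (t R : ℝ) (θ : Fin m → ℝ) (ρ : ℝ) (ω : Fin m → ℝ) : ℝ :=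
  fderiv ℝ (fun ω' => Kint p t R θ ρ ω') ω (Pi.single j 1)

end PhaseDerivs

/-- The phase space `ℝ × ℝ^m × ℝ × ℝ^m` with coordinates `(R, θ, ρ, ω)`. -/
abbrev Phase (m : ℕ) : Type := ℝ × (Fin m → ℝ) × ℝ × (Fin m → ℝ)

/-- A curve `f = (R,θ,ρ,ω)` solves the interaction-picture Hamiltonian system
`Ṙ = ∂K/∂ρ, θ̇ = ∂K/∂ω, ρ̇ = -∂K/∂R, ω̇ = -∂K/∂θ` on the set `I` of times. -/
def IsIntSolOn {m : ℕ} (p : ℝ → (Fin m → ℝ) → ℝ → (Fin m → ℝ) → ℝ)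
    (f : ℝ → Phase m) (I : Set ℝ) : Prop :=
  ∀ t ∈ I,
    HasDerivAt (fun s => (f s).1) (KdRho p t (f t).1 (f t).2.1 (f t).2.2.1 (f t).2.2.2) t ∧
    (∀ j, HasDerivAt (fun s => (f s).2.1 j)
      (KdOmega p j t (f t).1 (f t).2.1 (f t).2.2.1 (f t).2.2.2) t) ∧
    HasDerivAt (fun s => (f s).2.2.1)
      (-(KdR p t (f t).1 (f t).2.1 (f t).2.2.1 (f t).2.2.2)) t ∧
    (∀ j, HasDerivAt (fun s => (f s).2.2.2 j)
      (-(KdTheta p j t (f t).1 (f t).2.1 (f t).2.2.1 (f t).2.2.2)) t)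

/-- The data of a scattering metric of short-range type on the end `(1,∞) × U`:
the boundary metric `h` (smooth, symmetric, positive definite) and the coefficients
`a₀, a₁, a₂` of the kinetic energy, smooth on `(1,∞) × U` with the short-range decay
`|∂_r^k ∂_θ^α a₀| ≤ C r^{-1-μ-k}`, `|∂_r^k ∂_θ^α a₁| ≤ C r^{-μ-k}`,
`|∂_r^k ∂_θ^α a₂| ≤ C r^{-μ-k}` on `(1,∞) × K` for every compact `K ⊆ U`. -/
structure Coeffs (m : ℕ) (μ : ℝ) (U : Set (Fin m → ℝ)) where
  hM : (Fin m → ℝ) → Matrix (Fin m) (Fin m) ℝ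
  a0 : ℝ → (Fin m → ℝ) → ℝ
  a1 : ℝ → (Fin m → ℝ) → Fin m → ℝ
  a2 : ℝ → (Fin m → ℝ) → Matrix (Fin m) (Fin m) ℝ
  hM_smooth : ∀ j k, ContDiffOn ℝ (⊤ : ℕ∞) (fun θ => hM θ j k) U
  hM_symm : ∀ θ ∈ U, (hM θ).IsSymm
  hM_posdef : ∀ θ ∈ U, (hM θ).PosDef
  a0_smooth : ContDiffOn ℝ (⊤ : ℕ∞) (fun z : ℝ × (Fin m → ℝ) => a0 z.1 z.2) (Ioi (1:ℝ) ×ˢ U)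
  a1_smooth : ∀ j, ContDiffOn ℝ (⊤ : ℕ∞) (fun z : ℝ × (Fin m → ℝ) => a1 z.1 z.2 j) (Ioi (1:ℝ) ×ˢ U)
  a2_smooth : ∀ j k, ContDiffOn ℝ (⊤ : ℕ∞) (fun z : ℝ × (Fin m → ℝ) => a2 z.1 z.2 j k) (Ioi (1:ℝ) ×ˢ U)
  a2_symm : ∀ r θ j k, a2 r θ j k = a2 r θ k j
  a0_decay : ∀ K : Set (Fin m → ℝ), IsCompact K → K ⊆ U → DecayOn a0 (1 + μ) 1 K
  a1_decay : ∀ K : Set (Fin m → ℝ), IsCompact K → K ⊆ U →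
    ∀ j, DecayOn (fun r θ => a1 r θ j) μ 1 K
  a2_decay : ∀ K : Set (Fin m → ℝ), IsCompact K → K ⊆ U →
    ∀ j k, DecayOn (fun r θ => a2 r θ j k) μ 1 K

/-- The kinetic energy function associated to the data `c`. -/
noncomputable def Coeffs.p {m : ℕ} {μ : ℝ} {U : Set (Fin m → ℝ)} (c : Coeffs m μ U) :
    ℝ → (Fin m → ℝ) → ℝ → (Fin m → ℝ) → ℝ :=
  energy c.hM c.a0 c.a1 c.a2

/-!
Along the flow `d/dt (r ρ) = ρ ∂p/∂ρ - r ∂p/∂r`. In the variables `(ρ, w)` with `w = r⁻¹ ω` the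
energy is a quadratic form, so Euler's identity turns the right-hand side into `2 p` minus the same
form with coefficients `r ∂_r a`, which are small for large `r`. Ellipticity absorbs this error, so
`d/dt (r ρ) ≥ p ≥ p₀` near `t = -∞`, whence `-r ρ` grows at least like `p₀ |t|`. Ellipticity
also bounds `ρ` in terms of the energy, so `r` itself grows linearly.
-/

section QuadForm

open scoped Matrix

variable {ι : Type*} [Fintype ι]

/-- The quadratic form in `(ρ, w) ∈ ℝ × ℝ^ι` with block coefficients `b0`, `b1`, `b2`. The energy
is of this shape in the rescaled momentum `w = r⁻¹ ω`. -/
noncomputable def quadForm (b0 : ℝ) (b1 : ι → ℝ) (b2 : Matrix ι ι ℝ) (ρ : ℝ) (w : ι → ℝ) : ℝ :=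
  b0 * ρ ^ 2 + ρ * (b1 ⬝ᵥ w) + w ⬝ᵥ b2 *ᵥ w

lemma dotProduct_mulVec_self_eq_sum (A : Matrix ι ι ℝ) (w : ι → ℝ) :
    w ⬝ᵥ A *ᵥ w = ∑ j, ∑ k, A j k * w j * w k := by
  simp only [dotProduct, Matrix.mulVec, Finset.mul_sum]
  exact Finset.sum_congr rfl fun j _ => Finset.sum_congr rfl fun k _ => by ring

lemma abs_dotProduct_le (v w : ι → ℝ) : |v ⬝ᵥ w| ≤ Fintype.card ι * (‖v‖ * ‖w‖) :=
  calc |v ⬝ᵥ w| ≤ ∑ j, |v j * w j| := Finset.abs_sum_le_sum_abs _ _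
    _ ≤ ∑ _j : ι, ‖v‖ * ‖w‖ := Finset.sum_le_sum fun j _ => by
        rw [abs_mul]
        exact mul_le_mul (norm_le_pi_norm v j) (norm_le_pi_norm w j) (abs_nonneg _) (norm_nonneg _)
    _ = Fintype.card ι * (‖v‖ * ‖w‖) := by simp

lemma abs_dotProduct_mulVec_self_le {A : Matrix ι ι ℝ} {ε : ℝ} (hε : 0 ≤ ε)
    (hA : ∀ j k, |A j k| ≤ ε) (w : ι → ℝ) :
    |w ⬝ᵥ A *ᵥ w| ≤ Fintype.card ι ^ 2 * ε * ‖w‖ ^ 2 := by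
  have hAw : ‖A *ᵥ w‖ ≤ Fintype.card ι * (ε * ‖w‖) := by
    refine (pi_norm_le_iff_of_nonneg (by positivity)).2 fun j => (abs_dotProduct_le _ _).trans ?_
    gcongr
    exact (pi_norm_le_iff_of_nonneg hε).2 (hA j)
  calc |w ⬝ᵥ A *ᵥ w| ≤ Fintype.card ι * (‖w‖ * ‖A *ᵥ w‖) := abs_dotProduct_le _ _
    _ ≤ Fintype.card ι * (‖w‖ * (Fintype.card ι * (ε * ‖w‖))) := by gcongr
    _ = Fintype.card ι ^ 2 * ε * ‖w‖ ^ 2 := by ring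

lemma abs_quadForm_le {b0 : ℝ} {b1 : ι → ℝ} {b2 : Matrix ι ι ℝ} {ε : ℝ} (h0 : |b0| ≤ ε)
    (h1 : ∀ j, |b1 j| ≤ ε) (h2 : ∀ j k, |b2 j k| ≤ ε) (ρ : ℝ) (w : ι → ℝ) :
    |quadForm b0 b1 b2 ρ w| ≤
      (1 + Fintype.card ι + Fintype.card ι ^ 2) * ε * (ρ ^ 2 + ‖w‖ ^ 2) := by
  have hε : 0 ≤ ε := (abs_nonneg _).trans h0
  have hdiag : |b0 * ρ ^ 2| ≤ ε * ρ ^ 2 := by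
    rw [abs_mul, abs_of_nonneg (sq_nonneg ρ)]
    gcongr
  have hcross : |ρ * (b1 ⬝ᵥ w)| ≤ Fintype.card ι * ε * (ρ ^ 2 + ‖w‖ ^ 2) :=
    calc |ρ * (b1 ⬝ᵥ w)| = |ρ| * |b1 ⬝ᵥ w| := abs_mul _ _
      _ ≤ |ρ| * (Fintype.card ι * (‖b1‖ * ‖w‖)) := by gcongr; exact abs_dotProduct_le _ _
      _ ≤ |ρ| * (Fintype.card ι * (ε * ‖w‖)) := by
        gcongr
        exact (pi_norm_le_iff_of_nonneg hε).2 h1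
      _ = Fintype.card ι * ε * (|ρ| * ‖w‖) := by ring
      _ ≤ Fintype.card ι * ε * (ρ ^ 2 + ‖w‖ ^ 2) := by
        gcongr
        nlinarith [two_mul_le_add_sq |ρ| ‖w‖, sq_abs ρ, sq_nonneg ρ, sq_nonneg ‖w‖]
  have hε_w : 0 ≤ ε * ‖w‖ ^ 2 := by positivity
  have hε_ρ : 0 ≤ Fintype.card ι ^ 2 * ε * ρ ^ 2 := by positivity
  calc |quadForm b0 b1 b2 ρ w|
      ≤ |b0 * ρ ^ 2| + |ρ * (b1 ⬝ᵥ w)| + |w ⬝ᵥ b2 *ᵥ w| := abs_add_three _ _ _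
    _ ≤ _ := by linarith [abs_dotProduct_mulVec_self_le hε h2 w]

lemma eventually_abs_quadForm_le {α X : Type*} {L : Filter α} {S : Set X} {b0 : α → X → ℝ}
    {b1 : α → X → ι → ℝ} {b2 : α → X → Matrix ι ι ℝ} (h0 : TendstoUniformlyOn b0 0 L S)
    (h1 : ∀ j, TendstoUniformlyOn (fun a x => b1 a x j) 0 L S)
    (h2 : ∀ j k, TendstoUniformlyOn (fun a x => b2 a x j k) 0 L S) {δ : ℝ} (hδ : 0 < δ) :
    ∀ᶠ a in L, ∀ x ∈ S, ∀ ρ w,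
      |quadForm (b0 a x) (b1 a x) (b2 a x) ρ w| ≤ δ * (ρ ^ 2 + ‖w‖ ^ 2) := by
  set N : ℝ := 1 + Fintype.card ι + Fintype.card ι ^ 2
  have hN : 0 < N := by positivity
  have small {f : α → X → ℝ} (hf : TendstoUniformlyOn f 0 L S) :
      ∀ᶠ a in L, ∀ x ∈ S, |f a x| ≤ δ / N := by
    filter_upwards [Metric.tendstoUniformlyOn_iff.1 hf (δ / N) (by positivity)] with a ha x hx
    simpa using (ha x hx).le
  filter_upwards [small h0, eventually_all.2 fun j => small (h1 j),
    eventually_all.2 fun j => eventually_all.2 fun k => small (h2 j k)] with a h0 h1 h2 x hx ρ w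
  have h := abs_quadForm_le (h0 x hx) (fun j => h1 j x hx) (fun j k => h2 j k x hx) ρ w
  rwa [show N * (δ / N) = δ from mul_div_cancel₀ δ hN.ne'] at h

lemma quadForm_smul_right (b0 : ℝ) (b1 : ι → ℝ) (b2 : Matrix ι ι ℝ) (ρ s : ℝ) (w : ι → ℝ) :
    quadForm b0 b1 b2 ρ (s • w) =
      b0 * ρ ^ 2 + s * (ρ * (b1 ⬝ᵥ w)) + s ^ 2 * (w ⬝ᵥ b2 *ᵥ w) := by
  simp only [quadForm, dotProduct_smul, smul_dotProduct, Matrix.mulVec_smul, smul_eq_mul]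
  ring

lemma quadForm_smul_coeff (s b0 : ℝ) (b1 : ι → ℝ) (b2 : Matrix ι ι ℝ) (ρ : ℝ) (w : ι → ℝ) :
    quadForm (s * b0) (s • b1) (s • b2) ρ w = s * quadForm b0 b1 b2 ρ w := by
  simp only [quadForm, smul_dotProduct, Matrix.smul_mulVec, dotProduct_smul, smul_eq_mul]
  ring

lemma hasDerivAt_quadForm_left (b0 : ℝ) (b1 : ι → ℝ) (b2 : Matrix ι ι ℝ) (ρ : ℝ) (w : ι → ℝ) :
    HasDerivAt (fun s => quadForm b0 b1 b2 s w) (2 * b0 * ρ + b1 ⬝ᵥ w) ρ := by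
  have h := (((hasDerivAt_pow 2 ρ).const_mul b0).add
    ((hasDerivAt_id ρ).mul_const (b1 ⬝ᵥ w))).add_const (w ⬝ᵥ b2 *ᵥ w)
  exact h.congr_deriv (by push_cast; ring)

lemma hasDerivAt_quadForm_inv_smul {b0 : ℝ → ℝ} {b1 : ℝ → ι → ℝ} {b2 : ℝ → Matrix ι ι ℝ}
    {b0' : ℝ} {b1' : ι → ℝ} {b2' : Matrix ι ι ℝ} {r : ℝ} (hr : r ≠ 0)
    (h0 : HasDerivAt b0 b0' r) (h1 : ∀ j, HasDerivAt (fun s => b1 s j) (b1' j) r)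
    (h2 : ∀ j k, HasDerivAt (fun s => b2 s j k) (b2' j k) r) (ρ : ℝ) (ω : ι → ℝ) :
    HasDerivAt (fun s => quadForm (b0 s) (b1 s) (b2 s) ρ (s⁻¹ • ω))
      (quadForm b0' b1' b2' ρ (r⁻¹ • ω) - r⁻¹ * (ρ * (b1 r ⬝ᵥ (r⁻¹ • ω)) +
        2 * ((r⁻¹ • ω) ⬝ᵥ b2 r *ᵥ (r⁻¹ • ω)))) r := by
  have hlin : HasDerivAt (fun s => b1 s ⬝ᵥ ω) (b1' ⬝ᵥ ω) r :=
    HasDerivAt.fun_sum fun j _ => (h1 j).mul_const (ω j)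
  have hquad : HasDerivAt (fun s => ω ⬝ᵥ b2 s *ᵥ ω) (ω ⬝ᵥ b2' *ᵥ ω) r :=
    HasDerivAt.fun_sum fun j _ => (HasDerivAt.fun_sum fun k _ =>
      (h2 j k).mul_const (ω k)).const_mul (ω j)
  have hinv := hasDerivAt_inv hr
  have h := ((h0.mul_const (ρ ^ 2)).add (hinv.mul (hlin.const_mul ρ))).add ((hinv.pow 2).mul hquad)
  simp only [quadForm_smul_right]
  refine h.congr_deriv ?_
  simp only [dotProduct_smul, smul_dotProduct, Matrix.mulVec_smul, smul_eq_mul, Pi.pow_apply,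
    Nat.cast_ofNat, Nat.add_one_sub_one, pow_one]
  field_simp
  ring

lemma exists_pos_forall_mul_sq_norm_le_of_posDef {X : Type*} [TopologicalSpace X] {K : Set X}
    (hK : IsCompact K) {A : X → Matrix ι ι ℝ} (hcont : ∀ j k, ContinuousOn (fun x => A x j k) K)
    (hpos : ∀ x ∈ K, (A x).PosDef) :
    ∃ l > 0, ∀ x ∈ K, ∀ w : ι → ℝ, l * ‖w‖ ^ 2 ≤ w ⬝ᵥ A x *ᵥ w := by
  have hform : ContinuousOn (fun z : X × (ι → ℝ) => z.2 ⬝ᵥ A z.1 *ᵥ z.2)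
      (K ×ˢ Metric.sphere 0 1) := by
    simp only [dotProduct_mulVec_self_eq_sum]
    refine continuousOn_finsetSum _ fun j _ => continuousOn_finsetSum _ fun k _ => ?_
    have hA : ContinuousOn (fun z : X × (ι → ℝ) => A z.1 j k) (K ×ˢ Metric.sphere 0 1) :=
      (hcont j k).comp continuousOn_fst fun z hz => hz.1
    exact (hA.mul (by fun_prop)).mul (by fun_prop)
  obtain ⟨l, hl, hsphere⟩ := (hK.prod (isCompact_sphere 0 1)).exists_forall_le' hform (a := 0) <| by
    rintro ⟨x, w⟩ ⟨hx, hw⟩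
    have hw0 : w ≠ 0 := ne_zero_of_mem_unit_sphere ⟨w, hw⟩
    simpa using (hpos x hx).dotProduct_mulVec_pos hw0
  refine ⟨l, hl, fun x hx w => ?_⟩
  rcases eq_or_ne w 0 with rfl | hw
  · simp
  have hunit := hsphere (x, ‖w‖⁻¹ • w) ⟨hx, by simp [norm_smul, hw]⟩
  have hw' : 0 < ‖w‖ := norm_pos_iff.2 hw
  have hscale : (‖w‖⁻¹ • w) ⬝ᵥ A x *ᵥ (‖w‖⁻¹ • w) = (w ⬝ᵥ A x *ᵥ w) / ‖w‖ ^ 2 := by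
    simp only [dotProduct_smul, smul_dotProduct, Matrix.mulVec_smul, smul_eq_mul]
    field_simp
  rwa [hscale, le_div_iff₀ (by positivity)] at hunit

end QuadForm

section RadialDecay

variable {m : ℕ} {f : ℝ → (Fin m → ℝ) → ℝ} {K : Set (Fin m → ℝ)}

/-- `f` and `r ∂_r f` tend to zero as `r → ∞`, uniformly on `K`. Differentiability is
part of the notion because `pderivR` is zero where `f` is not differentiable in `r`. -/
structure RadiallyVanishingOn (f : ℝ → (Fin m → ℝ) → ℝ) (K : Set (Fin m → ℝ)) : Prop where
  differentiableAt : ∀ᶠ r in atTop, ∀ θ ∈ K, DifferentiableAt ℝ (fun s => f s θ) r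
  tendsto : TendstoUniformlyOn f 0 atTop K
  tendsto_mul_pderivR : TendstoUniformlyOn (fun r θ => r * pderivR f r θ) 0 atTop K

lemma DecayOn.tendstoUniformlyOn_pow_mul_iterate_pderivR {ν S : ℝ} (hf : DecayOn f ν S K)
    (hν : 0 < ν) (k : ℕ) (α : List (Fin m)) :
    TendstoUniformlyOn (fun r θ => r ^ k * pderivR^[k] (thetaDerivs α f) r θ) 0 atTop K := by
  obtain ⟨C, -, hC⟩ := hf k α
  have hlim : Tendsto (fun r : ℝ => C * r ^ (-ν)) atTop (𝓝 0) := by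
    simpa using (tendsto_rpow_neg_atTop hν).const_mul C
  refine Metric.tendstoUniformlyOn_iff.2 fun ε hε => ?_
  filter_upwards [hlim.eventually_lt_const hε, eventually_gt_atTop S, eventually_gt_atTop 0]
    with r hrε hrS hr θ hθ
  rw [Pi.zero_apply, dist_zero_left, norm_mul, norm_of_nonneg (by positivity)]
  calc r ^ k * ‖pderivR^[k] (thetaDerivs α f) r θ‖
      ≤ r ^ k * (C * r ^ (-ν - (k : ℝ))) := by gcongr; exact hC r hrS θ hθ
    _ = C * r ^ (-ν) := by rw [rpow_sub hr, rpow_natCast]; field_simp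
    _ < ε := hrε

lemma DecayOn.radiallyVanishingOn {ν S R : ℝ} {U : Set (Fin m → ℝ)} (hf : DecayOn f ν S K)
    (hν : 0 < ν) (hU : IsOpen U) (hKU : K ⊆ U)
    (hdiff : DifferentiableOn ℝ (fun z : ℝ × (Fin m → ℝ) => f z.1 z.2) (Ioi R ×ˢ U)) :
    RadiallyVanishingOn f K where
  differentiableAt := by
    filter_upwards [eventually_gt_atTop R] with r hr θ hθ
    have h : DifferentiableAt ℝ (fun z : ℝ × (Fin m → ℝ) => f z.1 z.2) (r, θ) :=
      hdiff.differentiableAt ((isOpen_Ioi.prod hU).mem_nhds ⟨hr, hKU hθ⟩)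
    exact h.comp r (f := fun s : ℝ => (s, θ)) (by fun_prop)
  tendsto := by
    simpa [thetaDerivs] using hf.tendstoUniformlyOn_pow_mul_iterate_pderivR hν 0 []
  tendsto_mul_pderivR := by
    simpa [thetaDerivs] using hf.tendstoUniformlyOn_pow_mul_iterate_pderivR hν 1 []

end RadialDecay

section Virial

open scoped Matrix

variable {m : ℕ}

/-- The virial `ρ ∂p/∂ρ - r ∂p/∂r`, i.e. the Poisson bracket of `r ρ` with `p`: the time derivative
of `r ρ` along the Hamiltonian flow of `p`. -/
noncomputable def virial (p : ℝ → (Fin m → ℝ) → ℝ → (Fin m → ℝ) → ℝ) (r : ℝ) (θ : Fin m → ℝ)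
    (ρ : ℝ) (ω : Fin m → ℝ) : ℝ :=
  ρ * pdRho p r θ ρ ω - r * pdR p r θ ρ ω

variable {hM : (Fin m → ℝ) → Matrix (Fin m) (Fin m) ℝ} {a0 : ℝ → (Fin m → ℝ) → ℝ}
  {a1 : ℝ → (Fin m → ℝ) → Fin m → ℝ} {a2 : ℝ → (Fin m → ℝ) → Matrix (Fin m) (Fin m) ℝ}

/-- The quadratic form with coefficients `r ∂_r a0`, `r ∂_r a1`, `r ∂_r a2`, evaluated at
`(ρ, r⁻¹ ω)`: the deviation of the virial of the energy from twice the energy. -/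
noncomputable def radialDerivForm (a0 : ℝ → (Fin m → ℝ) → ℝ) (a1 : ℝ → (Fin m → ℝ) → Fin m → ℝ)
    (a2 : ℝ → (Fin m → ℝ) → Matrix (Fin m) (Fin m) ℝ) (r : ℝ) (θ : Fin m → ℝ) (ρ : ℝ)
    (ω : Fin m → ℝ) : ℝ :=
  quadForm (r * pderivR a0 r θ) (fun j => r * pderivR (fun s θ => a1 s θ j) r θ)
    (fun j k => r * pderivR (fun s θ => a2 s θ j k) r θ) ρ (r⁻¹ • ω)

lemma energy_eq_quadForm (r : ℝ) (θ : Fin m → ℝ) (ρ : ℝ) (ω : Fin m → ℝ) :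
    energy hM a0 a1 a2 r θ ρ ω =
      quadForm (1 + a0 r θ) (a1 r θ) (hM θ + a2 r θ) ρ (r⁻¹ • ω) := by
  have hcross : ∑ j, a1 r θ j * ρ * ω j = ρ * (a1 r θ ⬝ᵥ ω) := by
    simp only [dotProduct, Finset.mul_sum]
    exact Finset.sum_congr rfl fun j _ => by ring
  rw [quadForm_smul_right, Matrix.add_mulVec, dotProduct_add, energy, hcross,
    dotProduct_mulVec_self_eq_sum, dotProduct_mulVec_self_eq_sum]
  ring

lemma virial_energy {r : ℝ} (hr : r ≠ 0) {θ : Fin m → ℝ}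
    (h0 : DifferentiableAt ℝ (fun s => a0 s θ) r)
    (h1 : ∀ j, DifferentiableAt ℝ (fun s => a1 s θ j) r)
    (h2 : ∀ j k, DifferentiableAt ℝ (fun s => a2 s θ j k) r) (ρ : ℝ) (ω : Fin m → ℝ) :
    virial (energy hM a0 a1 a2) r θ ρ ω =
      2 * energy hM a0 a1 a2 r θ ρ ω - radialDerivForm a0 a1 a2 r θ ρ ω := by
  have hR := hasDerivAt_quadForm_inv_smul (b2 := fun s => hM θ + a2 s θ) hr
    (h0.hasDerivAt.const_add 1) (fun j => (h1 j).hasDerivAt)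
    (fun j k => (h2 j k).hasDerivAt.const_add (hM θ j k)) ρ ω
  have hscale : radialDerivForm a0 a1 a2 r θ ρ ω =
      r * quadForm (pderivR a0 r θ) (fun j => pderivR (fun s θ => a1 s θ j) r θ)
        (fun j k => pderivR (fun s θ => a2 s θ j k) r θ) ρ (r⁻¹ • ω) :=
    quadForm_smul_coeff r _ _ _ ρ _
  rw [virial, pdRho, pdR, hscale]
  simp only [energy_eq_quadForm]
  rw [(hasDerivAt_quadForm_left _ _ _ _ _).deriv, hR.deriv]
  simp only [pderivR, quadForm]
  field_simp
  ring

/-- The hypotheses on the energy behind the escape estimate: the boundary metric `hM` is uniformly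
elliptic on `K` and the coefficients `a0`, `a1`, `a2` are radially vanishing there. -/
structure AsymptoticallyConicOn (hM : (Fin m → ℝ) → Matrix (Fin m) (Fin m) ℝ)
    (a0 : ℝ → (Fin m → ℝ) → ℝ) (a1 : ℝ → (Fin m → ℝ) → Fin m → ℝ)
    (a2 : ℝ → (Fin m → ℝ) → Matrix (Fin m) (Fin m) ℝ) (K : Set (Fin m → ℝ)) : Prop where
  elliptic : ∃ l > 0, ∀ θ ∈ K, ∀ w, l * ‖w‖ ^ 2 ≤ w ⬝ᵥ hM θ *ᵥ w
  a0_vanishing : RadiallyVanishingOn a0 K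
  a1_vanishing : ∀ j, RadiallyVanishingOn (fun r θ => a1 r θ j) K
  a2_vanishing : ∀ j k, RadiallyVanishingOn (fun r θ => a2 r θ j k) K

namespace AsymptoticallyConicOn

variable {K : Set (Fin m → ℝ)}

lemma exists_pos_eventually_le_energy (h : AsymptoticallyConicOn hM a0 a1 a2 K) :
    ∃ l > 0, ∀ᶠ r in atTop, ∀ θ ∈ K, ∀ ρ ω,
      l * (ρ ^ 2 + ‖r⁻¹ • ω‖ ^ 2) ≤ energy hM a0 a1 a2 r θ ρ ω := by
  obtain ⟨l, hl, hell⟩ := h.elliptic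
  have hδ : 0 < min l 1 / 2 := by positivity
  refine ⟨min l 1 / 2, hδ, ?_⟩
  filter_upwards [eventually_abs_quadForm_le h.a0_vanishing.tendsto
    (fun j => (h.a1_vanishing j).tendsto) (fun j k => (h.a2_vanishing j k).tendsto) hδ]
    with r hsmall θ hθ ρ ω
  set w := r⁻¹ • ω
  have hsplit : energy hM a0 a1 a2 r θ ρ ω =
      ρ ^ 2 + w ⬝ᵥ hM θ *ᵥ w + quadForm (a0 r θ) (a1 r θ) (a2 r θ) ρ w := by
    rw [energy_eq_quadForm, quadForm, quadForm, Matrix.add_mulVec, dotProduct_add]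
    ring
  have hmain : min l 1 * (ρ ^ 2 + ‖w‖ ^ 2) ≤ ρ ^ 2 + w ⬝ᵥ hM θ *ᵥ w :=
    calc min l 1 * (ρ ^ 2 + ‖w‖ ^ 2) = min l 1 * ρ ^ 2 + min l 1 * ‖w‖ ^ 2 := mul_add _ _ _
      _ ≤ 1 * ρ ^ 2 + l * ‖w‖ ^ 2 := by
        gcongr
        exacts [min_le_right _ _, min_le_left _ _]
      _ ≤ ρ ^ 2 + w ⬝ᵥ hM θ *ᵥ w := by rw [one_mul]; gcongr; exact hell θ hθ w
  linarith [(abs_le.1 (hsmall θ hθ ρ w)).1]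

lemma eventually_energy_le_virial (h : AsymptoticallyConicOn hM a0 a1 a2 K) :
    ∀ᶠ r in atTop, ∀ θ ∈ K, ∀ ρ ω,
      energy hM a0 a1 a2 r θ ρ ω ≤ virial (energy hM a0 a1 a2) r θ ρ ω := by
  obtain ⟨l, hl, hcoercive⟩ := h.exists_pos_eventually_le_energy
  filter_upwards [hcoercive, eventually_ne_atTop 0, h.a0_vanishing.differentiableAt,
    eventually_all.2 fun j => (h.a1_vanishing j).differentiableAt,
    eventually_all.2 fun j => eventually_all.2 fun k => (h.a2_vanishing j k).differentiableAt,
    eventually_abs_quadForm_le h.a0_vanishing.tendsto_mul_pderivR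
      (fun j => (h.a1_vanishing j).tendsto_mul_pderivR)
      (fun j k => (h.a2_vanishing j k).tendsto_mul_pderivR) hl]
    with r hcoercive hr h0 h1 h2 hsmall θ hθ ρ ω
  have herror : radialDerivForm a0 a1 a2 r θ ρ ω ≤ energy hM a0 a1 a2 r θ ρ ω :=
    (le_of_abs_le (hsmall θ hθ ρ (r⁻¹ • ω))).trans (hcoercive θ hθ ρ ω)
  rw [virial_energy hr (h0 θ hθ) (fun j => h1 j θ hθ) (fun j k => h2 j k θ hθ)]
  linarith

end AsymptoticallyConicOn

lemma Coeffs.asymptoticallyConicOn {μ : ℝ} (hμ : 0 < μ) {U : Set (Fin m → ℝ)} (hU : IsOpen U)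
    (c : Coeffs m μ U) {K : Set (Fin m → ℝ)} (hK : IsCompact K) (hKU : K ⊆ U) :
    AsymptoticallyConicOn c.hM c.a0 c.a1 c.a2 K where
  elliptic := exists_pos_forall_mul_sq_norm_le_of_posDef hK
    (fun j k => (c.hM_smooth j k).continuousOn.mono hKU) fun θ hθ => c.hM_posdef θ (hKU hθ)
  a0_vanishing := (c.a0_decay K hK hKU).radiallyVanishingOn (by positivity) hU hKU
    (c.a0_smooth.differentiableOn (by simp))
  a1_vanishing j := (c.a1_decay K hK hKU j).radiallyVanishingOn hμ hU hKU
    ((c.a1_smooth j).differentiableOn (by simp))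
  a2_vanishing j k := (c.a2_decay K hK hKU j k).radiallyVanishingOn hμ hU hKU
    ((c.a2_smooth j k).differentiableOn (by simp))

end Virial

section Escape

lemma exists_linear_lower_bound_of_le_deriv_mul {r ρ v : ℝ → ℝ} {B e : ℝ} (hB : 0 < B) (he : 0 ≤ e)
    (hr : ∀ᶠ t in atBot, 0 < r t) (hρ : ∀ᶠ t in atBot, -B ≤ ρ t)
    (hderiv : ∀ᶠ t in atBot, HasDerivAt (fun s => r s * ρ s) (v t) t)
    (hv : ∀ᶠ t in atBot, e ≤ v t) :
    ∃ D, ∀ᶠ t in atBot, e / B * |t| - D ≤ r t := by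
  obtain ⟨T, hT⟩ := eventually_atBot.1 (hr.and (hρ.and (hderiv.and hv)))
  have hgrowth : ∀ t ≤ T, e * (T - t) ≤ r T * ρ T - r t * ρ t := fun t ht =>
    (convex_Iic T).mul_sub_le_image_sub_of_le_deriv (f := fun s => r s * ρ s)
      (fun s hs => (hT s hs).2.2.1.continuousAt.continuousWithinAt)
      (fun s hs => by
        have hs' : s ∈ Iic T := interior_subset hs
        exact (hT s hs').2.2.1.differentiableAt.differentiableWithinAt)
      (fun s hs => by
        have hs' : s ∈ Iic T := interior_subset hs
        obtain ⟨-, -, hd, hle⟩ := hT s hs'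
        rwa [hd.deriv])
      t ht T self_mem_Iic ht
  refine ⟨(e * |T| + r T * ρ T) / B, eventually_atBot.2 ⟨T, fun t ht => ?_⟩⟩
  obtain ⟨hrt, hρt, -⟩ := hT t ht
  have habs : |t| ≤ (T - t) + |T| := by
    rw [← abs_of_nonneg (sub_nonneg.2 ht)]
    linarith [abs_sub_abs_le_abs_sub t T, abs_sub_comm t T]
  have hlower : e * |t| - (e * |T| + r T * ρ T) ≤ r t * B := by
    linarith [hgrowth t ht, mul_le_mul_of_nonneg_left habs he,
      mul_le_mul_of_nonneg_left hρt hrt.le]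
  calc e / B * |t| - (e * |T| + r T * ρ T) / B = (e * |t| - (e * |T| + r T * ρ T)) / B := by ring
    _ ≤ r t := (div_le_iff₀ hB).2 hlower

lemma exists_forall_lt_neg_of_eventually_linear {r : ℝ → ℝ} {c D : ℝ} (hc : 0 < c)
    (h : ∀ᶠ t in atBot, c * |t| - D ≤ r t) :
    ∃ C > (0:ℝ), ∀ t < -C, r t > C⁻¹ * |t| - C := by
  obtain ⟨T, hT⟩ := eventually_atBot.1 h
  have hc' : 0 < c⁻¹ := inv_pos.2 hc
  set C := |T| + c⁻¹ + |D|
  have hTC : |T| ≤ C := by linarith [abs_nonneg D]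
  have hcC : c⁻¹ ≤ C := by linarith [abs_nonneg T, abs_nonneg D]
  have hDC : D < C := by linarith [abs_nonneg T, le_abs_self D]
  refine ⟨C, hc'.trans_le hcC, fun t ht => ?_⟩
  calc C⁻¹ * |t| - C ≤ c * |t| - C := by gcongr; exact inv_le_of_inv_le₀ hc hcC
    _ < c * |t| - D := by gcongr
    _ ≤ r t := hT t (by linarith [neg_abs_le T])

theorem statement_4_general {m : ℕ} {hM : (Fin m → ℝ) → Matrix (Fin m) (Fin m) ℝ}
    {a0 : ℝ → (Fin m → ℝ) → ℝ} {a1 : ℝ → (Fin m → ℝ) → Fin m → ℝ}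
    {a2 : ℝ → (Fin m → ℝ) → Matrix (Fin m) (Fin m) ℝ} {K : Set (Fin m → ℝ)}
    (hconic : AsymptoticallyConicOn hM a0 a1 a2 K)
    {r : ℝ → ℝ} {θ : ℝ → Fin m → ℝ} {ρ : ℝ → ℝ} {ω : ℝ → Fin m → ℝ} {p₀ p₁ : ℝ} (hp₀ : 0 < p₀)
    (hθ : ∀ᶠ t in atBot, θ t ∈ K)
    (hr : ∀ᶠ t in atBot,
      HasDerivAt r (pdRho (energy hM a0 a1 a2) (r t) (θ t) (ρ t) (ω t)) t)
    (hρ : ∀ᶠ t in atBot,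
      HasDerivAt ρ (-pdR (energy hM a0 a1 a2) (r t) (θ t) (ρ t) (ω t)) t)
    (hen : ∀ᶠ t in atBot, energy hM a0 a1 a2 (r t) (θ t) (ρ t) (ω t) ∈ Icc p₀ p₁)
    (hesc : Tendsto r atBot atTop) :
    ∃ C > (0:ℝ), ∀ t < -C, r t > C⁻¹ * |t| - C := by
  obtain ⟨l, hl, hcoercive⟩ := hconic.exists_pos_eventually_le_energy
  have hp₁ : 0 < p₁ := let ⟨_, ht⟩ := hen.exists; hp₀.trans_le (ht.1.trans ht.2)
  have hB : 0 < √(p₁ / l) := by positivity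
  have hρ_bound : ∀ᶠ t in atBot, -√(p₁ / l) ≤ ρ t := by
    filter_upwards [hesc.eventually hcoercive, hθ, hen] with t hcoercive hθ hen
    refine neg_le_of_abs_le (abs_le_sqrt ((le_div_iff₀' hl).2 ?_))
    calc l * ρ t ^ 2 ≤ l * (ρ t ^ 2 + ‖(r t)⁻¹ • ω t‖ ^ 2) := by gcongr; simp
      _ ≤ p₁ := (hcoercive _ hθ _ _).trans hen.2
  have hderiv : ∀ᶠ t in atBot, HasDerivAt (fun s => r s * ρ s)
      (virial (energy hM a0 a1 a2) (r t) (θ t) (ρ t) (ω t)) t := by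
    filter_upwards [hr, hρ] with t hr hρ
    exact (hr.mul hρ).congr_deriv (by rw [virial]; ring)
  have hvirial : ∀ᶠ t in atBot, p₀ ≤ virial (energy hM a0 a1 a2) (r t) (θ t) (ρ t) (ω t) := by
    filter_upwards [hesc.eventually hconic.eventually_energy_le_virial, hθ, hen] with t hle hθ hen
    exact hen.1.trans (hle _ hθ _ _)
  obtain ⟨D, hD⟩ := exists_linear_lower_bound_of_le_deriv_mul hB hp₀.le
    (hesc.eventually_gt_atTop 0) hρ_bound hderiv hvirial
  exact exists_forall_lt_neg_of_eventually_linear (by positivity) hD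

end Escape

/-- Lemma 2.1, escape estimate. A backward nontrapped trajectory of
positive energy escapes linearly: `r(t) > C⁻¹|t| - C` for `t < -C`. -/
theorem statement_4 {m : ℕ} (hm : 1 ≤ m) {μ : ℝ} (hμ : μ ∈ Ioo (0:ℝ) 1)
    {U : Set (Fin m → ℝ)} (hU : IsOpen U) (c : Coeffs m μ U)
    (K : Set (Fin m → ℝ)) (hK : IsCompact K) (hKU : K ⊆ U) (T₀ : ℝ)
    (r : ℝ → ℝ) (θ : ℝ → Fin m → ℝ) (ρ : ℝ → ℝ) (ω : ℝ → Fin m → ℝ)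
    (p₀ : ℝ) (hp₀ : 0 < p₀)
    (hdom : ∀ t ≤ T₀, r t ∈ Ioi (1:ℝ) ∧ θ t ∈ K)
    (hsol : IsHamSolOn c.p r θ ρ ω (Iic T₀))
    (hen : ∀ t ≤ T₀, c.p (r t) (θ t) (ρ t) (ω t) = p₀)
    (hesc : Tendsto r atBot atTop) :
    ∃ C > (0:ℝ), ∀ t < -C, r t > C⁻¹ * |t| - C := by
  have hpast : ∀ᶠ t in atBot, t ≤ T₀ := eventually_le_atBot T₀
  exact statement_4_general (c.asymptoticallyConicOn hμ.1 hU hK hKU) hp₀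
    (hpast.mono fun t ht => (hdom t ht).2) (hpast.mono fun t ht => (hsol t ht).1)
    (hpast.mono fun t ht => (hsol t ht).2.2.1)
    (hpast.mono fun t ht => ⟨(hen t ht).ge, (hen t ht).le⟩) hesc

end Scattering
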